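/- arXiv:2512.04190 — 2 statements merged into one kernel-verified Lean document; each statement's English description precedes it below -/
import Mathlib

section
/- Consider the one-parameter family of coefficient vectors (1,−1,c,−1). Over the field ℚ(t) of rational functions in one variable t, the matrix of consequences M(1,−1,t,−1) has rank exactly 32; moreover, over ℚ, the matrices M(1,−1,1,−1) and M(1,−1,−1,−1) each have rank exactly 27. (The vector (1,−1,−1,−1) corresponds to the ternary derivation identity L(xyz) = L(x)yz + xL(y)z + xyL(z).) -/
/-- First components `p_i` (1-indexed columns) of the 42 quadruples. -/
def colP : Fin 42 → ℕ :=
  ![4,8,11,13,14,1,4,8,11,13,14,1,4,8,11,13,14,1,5,9,12,15,16,2,17,24,26,27,28,7,19,29,34,36,37,10,2,7,10,3,23,33]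

/-- Second components `q_i`. -/
def colQ : Fin 42 → ℕ :=
  ![5,9,12,15,16,2,6,18,20,21,22,4,6,18,20,21,22,4,6,18,20,21,22,4,18,25,30,31,32,8,20,30,35,38,39,11,3,17,19,5,24,34]

/-- Third components `r_i`. -/
def colR : Fin 42 → ℕ :=
  ![21,31,38,40,41,13,17,24,26,27,28,7,18,25,30,31,32,8,18,25,30,31,32,8,20,30,35,38,39,11,21,31,38,40,41,13,15,23,29,9,26,36]

/-- Fourth components `s_i`. -/
def colS : Fin 42 → ℕ :=
  ![22,32,39,41,42,14,22,32,39,41,42,14,19,29,34,36,37,10,20,30,35,38,39,11,21,31,38,40,41,13,22,32,39,41,42,14,16,28,33,12,27,37]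

/-- The 42×42 matrix of consequences `M(a,b,c,d)` over a field `K`:
row `i` has entry `a` in column `p_i`, `b` in column `q_i`, `c` in column `r_i`,
`d` in column `s_i` (columns counted 1-based), and `0` elsewhere. -/
def consMatrix (K : Type*) [Field K] (a b c d : K) : Matrix (Fin 42) (Fin 42) K :=
  fun i j =>
    (if (j : ℕ) + 1 = colP i then a else 0) +
    (if (j : ℕ) + 1 = colQ i then b else 0) +
    (if (j : ℕ) + 1 = colR i then c else 0) +
    (if (j : ℕ) + 1 = colS i then d else 0)

/-- Entry lookup in a sparse vector. -/
def look : List (ℕ × ℤ) → ℕ → ℤ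
  | [], _ => 0
  | (i, v) :: l, n => bif Nat.beq i n then v else look l n

/-- Entry lookup in a sparse list of columns. -/
def ent (L : List (List (ℕ × ℤ))) (n k : ℕ) : ℤ := look (L.getD k []) n

/-- The matrix of consequences over a commutative ring. -/
def ringMatrix (K : Type*) [CommRing K] (a b c d : K) : Matrix (Fin 42) (Fin 42) K :=
  fun i j =>
    (if (j : ℕ) + 1 = colP i then a else 0) +
    (if (j : ℕ) + 1 = colQ i then b else 0) +
    (if (j : ℕ) + 1 = colR i then c else 0) +
    (if (j : ℕ) + 1 = colS i then d else 0)

lemma sum_pick {K : Type*} [CommRing K] (a : K) (f : ℕ → K) (p : ℕ) (h : 1 ≤ p ∧ p ≤ 42) :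
    ∑ j : Fin 42, (if (j : ℕ) + 1 = p then a else 0) * f ((j : ℕ) + 1) = a * f p := by
  obtain ⟨h1, h2⟩ := h
  rw [Finset.sum_eq_single (⟨p - 1, by omega⟩ : Fin 42)]
  · have : p - 1 + 1 = p := by omega
    simp [this]
  · intro j _ hj
    have : (j : ℕ) + 1 ≠ p := by
      intro h
      apply hj
      ext
      simp
      omega
    simp [this]
  · simp

lemma range_cols : ∀ i, (1 ≤ colP i ∧ colP i ≤ 42) ∧ (1 ≤ colQ i ∧ colQ i ≤ 42) ∧
    (1 ≤ colR i ∧ colR i ≤ 42) ∧ (1 ≤ colS i ∧ colS i ≤ 42) := by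
  decide +kernel

lemma ringMatrix_mul {K : Type*} [CommRing K] (a b c d : K) {r : ℕ} (f : ℕ → Fin r → K)
    (i : Fin 42) (k : Fin r) :
    (ringMatrix K a b c d * Matrix.of (fun (j : Fin 42) k => f ((j : ℕ) + 1) k)) i k =
      a * f (colP i) k + b * f (colQ i) k + c * f (colR i) k + d * f (colS i) k := by
  obtain ⟨h1, h2, h3, h4⟩ := range_cols i
  simp only [Matrix.mul_apply, ringMatrix, Matrix.of_apply, add_mul, Finset.sum_add_distrib]
  rw [sum_pick a (fun n => f n k) _ h1, sum_pick b (fun n => f n k) _ h2,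
    sum_pick c (fun n => f n k) _ h3, sum_pick d (fun n => f n k) _ h4]

lemma consMatrix_eq (K : Type*) [Field K] (a b c d : K) :
    consMatrix K a b c d = ringMatrix K a b c d := rfl

/-- A family of kernel vectors that is the identity on some coordinates bounds the rank. -/
lemma rank_upper {K : Type*} [Field K] (c : K) {r : ℕ} (f : ℕ → Fin r → K)
    (g : Fin r → Fin 42)
    (hg : ∀ k l, f ((g k : ℕ) + 1) l = if k = l then 1 else 0)
    (hf : ∀ i k, f (colP i) k - f (colQ i) k + c * f (colR i) k - f (colS i) k = 0) :
    (consMatrix K 1 (-1) c (-1)).rank + r ≤ 42 := by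
  rw [consMatrix_eq]
  set N : Matrix (Fin 42) (Fin r) K := Matrix.of (fun (j : Fin 42) k => f ((j : ℕ) + 1) k)
    with hN
  have h0 : ringMatrix K 1 (-1) c (-1) * N = 0 := by
    ext i k
    rw [hN, ringMatrix_mul, Matrix.zero_apply]
    linear_combination hf i k
  have h1 := Matrix.rank_add_rank_le_card_of_mul_eq_zero h0
  have h2 : N.submatrix g id = 1 := by
    ext k l
    simp [hN, hg, Matrix.one_apply]
  have h3 : r ≤ N.rank := by
    have := Matrix.rank_submatrix_le N g id
    rw [h2, Matrix.rank_one, Fintype.card_fin] at this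
    exact this
  rw [Fintype.card_fin] at h1
  omega

/-- A nonzero determinant of (selected rows) times a matrix bounds the rank from below. -/
lemma rank_lower_det {K : Type*} [Field K] {r : ℕ} (A : Matrix (Fin 42) (Fin 42) K)
    (N : Matrix (Fin 42) (Fin r) K) (g : Fin r → Fin 42)
    (h : ((A * N).submatrix g id).det ≠ 0) : r ≤ A.rank := by
  have h1 := Matrix.rank_of_isUnit _ ((Matrix.isUnit_iff_isUnit_det _).2 (isUnit_iff_ne_zero.2 h))
  rw [Fintype.card_fin] at h1
  calc r = ((A * N).submatrix g id).rank := h1.symm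
    _ ≤ (A * N).rank := Matrix.rank_submatrix_le _ _ _
    _ ≤ A.rank := Matrix.rank_mul_le_left _ _

/-- A sparse integer certificate as a matrix over `K`. -/
def entMat (K : Type*) [CommRing K] (r : ℕ) (L : List (List (ℕ × ℤ))) :
    Matrix (Fin 42) (Fin r) K :=
  Matrix.of (fun (j : Fin 42) (l : Fin r) => ((ent L ((j : ℕ) + 1) l : ℤ) : K))

lemma entMat_mul {K : Type*} [CommRing K] (a b c d : K) {r : ℕ} (L : List (List (ℕ × ℤ)))
    (g : Fin r → Fin 42) (i k : Fin r) :
    ((ringMatrix K a b c d * entMat K r L).submatrix g id) i k =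
      a * (ent L (colP (g i)) k : ℤ) + b * (ent L (colQ (g i)) k : ℤ)
        + c * (ent L (colR (g i)) k : ℤ) + d * (ent L (colS (g i)) k : ℤ) :=
  ringMatrix_mul a b c d (fun n (l : Fin r) => ((ent L n l : ℤ) : K)) (g i) k

/-- The integer certificate gives a nonzero determinant over any ring of characteristic zero. -/
lemma cert_det {K : Type*} [Field K] [CharZero K] (c k : ℤ) (hk : k ≠ 0) {r : ℕ}
    (L : List (List (ℕ × ℤ))) (g : Fin r → Fin 42)
    (h : ∀ i j : Fin r, ent L (colP (g i)) j - ent L (colQ (g i)) j + c * ent L (colR (g i)) j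
      - ent L (colS (g i)) j = if i = j then k else 0) :
    ((ringMatrix K 1 (-1) (c : K) (-1) * entMat (K) r L).submatrix g id).det ≠ 0 := by
  have : (ringMatrix K 1 (-1) (c : K) (-1) * entMat (K) r L).submatrix g id
      = (k : K) • (1 : Matrix (Fin r) (Fin r) K) := by
    ext i j
    rw [entMat_mul]
    have h' := congrArg (fun z : ℤ => (z : K)) (h i j)
    simp only [Int.cast_add, Int.cast_sub, Int.cast_mul, Int.cast_ite, Int.cast_zero] at h'
    rw [Matrix.smul_apply, Matrix.one_apply, smul_eq_mul, mul_ite, mul_one, mul_zero, ← h']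
    ring
  rw [this, Matrix.det_smul, Matrix.det_one, mul_one]
  exact pow_ne_zero _ (Int.cast_ne_zero.2 hk)

lemma rank_lower_int (c k : ℤ) (hk : k ≠ 0) {r : ℕ}
    (L : List (List (ℕ × ℤ))) (g : Fin r → Fin 42)
    (h : ∀ i j : Fin r, ent L (colP (g i)) j - ent L (colQ (g i)) j + c * ent L (colR (g i)) j
      - ent L (colS (g i)) j = if i = j then k else 0) :
    r ≤ (consMatrix ℚ 1 (-1) (c : ℚ) (-1)).rank :=
  rank_lower_det _ _ g (cert_det (K := ℚ) c k hk L g h)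

lemma rank_upper_int (c : ℤ) {r : ℕ} (L : List (List (ℕ × ℤ))) (g : Fin r → Fin 42)
    (hg : ∀ k l : Fin r, ent L ((g k : ℕ) + 1) l = if k = l then 1 else 0)
    (hf : ∀ (i : Fin 42) (k : Fin r), ent L (colP i) k - ent L (colQ i) k + c * ent L (colR i) k
      - ent L (colS i) k = 0) :
    (consMatrix ℚ 1 (-1) (c : ℚ) (-1)).rank + r ≤ 42 := by
  refine rank_upper (c : ℚ) (fun n (l : Fin r) => ((ent L n l : ℤ) : ℚ)) g ?_ ?_
  · intro k l
    rw [hg]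
    split_ifs <;> simp
  · intro i k
    exact_mod_cast hf i k

/-- Generic lower bound, by specializing `t` to an integer `c`. -/
lemma rank_lower_gen (c k : ℤ) (hk : k ≠ 0) {r : ℕ}
    (L : List (List (ℕ × ℤ))) (g : Fin r → Fin 42)
    (h : ∀ i j : Fin r, ent L (colP (g i)) j - ent L (colQ (g i)) j + c * ent L (colR (g i)) j
      - ent L (colS (g i)) j = if i = j then k else 0) :
    r ≤ (consMatrix (RatFunc ℚ) 1 (-1) RatFunc.X (-1)).rank := by
  have hQ := cert_det (K := ℚ) c k hk L g h
  -- the selected product over the polynomial ring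
  let B : Matrix (Fin r) (Fin r) (Polynomial ℚ) :=
    (ringMatrix (Polynomial ℚ) 1 (-1) Polynomial.X (-1) * entMat (Polynomial ℚ) r L).submatrix g id
  have hB : B.det ≠ 0 := by
    intro h0
    apply hQ
    have h1 := congrArg (Polynomial.evalRingHom (c : ℚ)) h0
    rw [RingHom.map_det, map_zero] at h1
    rw [← h1]
    congr 1
    ext i j
    simp only [B, RingHom.mapMatrix_apply, Matrix.map_apply, entMat_mul]
    simp
  refine rank_lower_det _ (entMat (RatFunc ℚ) r L) g ?_
  intro h0
  apply hB
  apply IsFractionRing.injective (Polynomial ℚ) (RatFunc ℚ)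
  rw [RingHom.map_det, map_zero, ← h0, consMatrix_eq]
  congr 1
  ext i j
  simp only [B, RingHom.mapMatrix_apply, Matrix.map_apply, entMat_mul]
  simp

lemma rank_upper_gen {r : ℕ} (L0 L1 L2 : List (List (ℕ × ℤ))) (g : Fin r → Fin 42)
    (hg : ∀ k l : Fin r, ent L0 ((g k : ℕ) + 1) l = (if k = l then 1 else 0) ∧
      ent L1 ((g k : ℕ) + 1) l = 0 ∧ ent L2 ((g k : ℕ) + 1) l = 0)
    (hf : ∀ (i : Fin 42) (k : Fin r),
      ent L0 (colP i) k - ent L0 (colQ i) k - ent L0 (colS i) k = 0 ∧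
      ent L1 (colP i) k - ent L1 (colQ i) k - ent L1 (colS i) k + ent L0 (colR i) k = 0 ∧
      ent L2 (colP i) k - ent L2 (colQ i) k - ent L2 (colS i) k + ent L1 (colR i) k = 0 ∧
      ent L2 (colR i) k = 0) {K : Type*} [Field K] (x : K) :
    (consMatrix K 1 (-1) x (-1)).rank + r ≤ 42 := by
  refine rank_upper x (fun n (l : Fin r) => ((ent L0 n l : ℤ) : K) + x * ((ent L1 n l : ℤ) : K)
    + x ^ 2 * ((ent L2 n l : ℤ) : K)) g ?_ ?_
  · intro k l
    obtain ⟨h0, h1, h2⟩ := hg k l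
    simp only [h0, h1, h2]
    split_ifs <;> simp
  · intro i k
    obtain ⟨h0, h1, h2, h3⟩ := hf i k
    replace h0 := congrArg (fun z : ℤ => (z : K)) h0
    replace h1 := congrArg (fun z : ℤ => (z : K)) h1
    replace h2 := congrArg (fun z : ℤ => (z : K)) h2
    replace h3 := congrArg (fun z : ℤ => (z : K)) h3
    push_cast at h0 h1 h2 h3
    linear_combination h0 + x * h1 + x ^ 2 * h2 + x ^ 3 * h3

/-- Selected rows at `c = 1`. -/
def rowsOne : Fin 27 → Fin 42 :=
  ![0, 1, 2, 5, 6, 8, 9, 10, 11, 12, 13, 14, 15, 16, 17, 18, 21, 22, 23, 25, 27, 28, 31, 32, 36, 38, 40]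

/-- Right inverse (up to the factor 1) of the selected rows at `c = 1`, as sparse columns. -/
def invOne : List (List (ℕ × ℤ)) :=
  [[(5, -1), (6, -1), (17, -1), (19, 1), (33, -1)],
   [(9, -1)],
   [(12, -1)],
   [(2, -1), (3, -1), (11, -1), (12, -1), (23, -1), (25, 1), (26, 1), (29, 1), (30, 1), (33, 1)],
   [(17, 1)],
   [(23, -1), (26, 1)],
   [(28, -1), (41, -1), (42, -1)],
   [(42, -1)],
   [(7, 1)],
   [(19, -1), (33, 1)],
   [(6, -1), (17, -1), (18, -1)],
   [(25, 1), (29, 1), (30, 1), (33, 1)],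
   [(36, -1)],
   [(37, -1)],
   [(10, -1), (33, -1)],
   [(6, -1), (17, -1), (19, 1), (33, -1)],
   [(5, -1), (6, -1), (17, -1), (19, 1), (21, -1), (28, 1), (33, -1), (36, 1), (41, 1), (42, 1)],
   [(3, -1), (16, 1)],
   [(11, -1), (12, -1), (23, -1), (25, 1), (26, 1), (29, 1), (30, 1), (33, 1)],
   [(6, -1), (17, -1), (18, -1), (25, -1)],
   [(5, -1), (6, -1), (12, 1), (17, -1), (19, 1), (21, -1), (28, 1), (33, -1), (35, 1), (36, 1), (38, 1), (41, 1), (42, 1)],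
   [(28, 1), (42, 1)],
   [(6, -1), (17, -1), (18, -1), (29, 1), (33, 1)],
   [(35, -1)],
   [(3, -1)],
   [(33, -1)],
   [(23, 1)]]

/-- Selected rows at `c = -1`. -/
def rowsNeg : Fin 27 → Fin 42 :=
  ![0, 1, 2, 5, 6, 8, 9, 10, 11, 12, 13, 14, 15, 16, 17, 18, 21, 22, 23, 25, 27, 28, 31, 32, 36, 38, 40]

/-- Right inverse (up to the factor 1) of the selected rows at `c = -1`, as sparse columns. -/
def invNeg : List (List (ℕ × ℤ)) :=
  [[(5, -1), (6, -1), (17, 1), (19, 1), (33, -1)],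
   [(9, -1)],
   [(12, -1)],
   [(2, -1), (3, -1), (11, -1), (12, -1), (23, -1), (25, 1), (26, -1), (29, -1), (30, -1), (33, 1)],
   [(17, -1)],
   [(23, -1), (26, -1)],
   [(28, -1), (41, -1), (42, 1)],
   [(42, -1)],
   [(7, -1)],
   [(19, -1), (33, 1)],
   [(6, 1), (17, -1), (18, -1)],
   [(25, 1), (29, -1), (30, -1), (33, 1)],
   [(36, -1)],
   [(37, -1)],
   [(10, -1), (33, -1)],
   [(6, -1), (17, 1), (19, 1), (33, -1)],
   [(5, 1), (6, 1), (17, -1), (19, -1), (21, -1), (28, 1), (33, 1), (36, 1), (41, 1), (42, -1)],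
   [(3, -1), (16, 1)],
   [(11, -1), (12, -1), (23, -1), (25, 1), (26, -1), (29, -1), (30, -1), (33, 1)],
   [(6, -1), (17, 1), (18, 1), (25, -1)],
   [(5, -1), (6, -1), (12, 1), (17, 1), (19, 1), (21, 1), (28, -1), (33, -1), (35, 1), (36, -1), (38, -1), (41, -1), (42, 1)],
   [(28, 1), (42, -1)],
   [(6, 1), (17, -1), (18, -1), (29, 1), (33, -1)],
   [(35, -1)],
   [(3, -1)],
   [(33, -1)],
   [(23, 1)]]

/-- Selected rows at `c = 2`. -/
def rowsTwo : Fin 32 → Fin 42 :=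
  ![0, 1, 2, 3, 5, 6, 7, 8, 9, 10, 11, 12, 13, 14, 15, 16, 17, 18, 21, 22, 23, 25, 27, 28, 29, 31, 32, 34, 36, 37, 38, 40]

/-- Right inverse (up to the factor 6) of the selected rows at `c = 2`, as sparse columns. -/
def invTwo : List (List (ℕ × ℤ)) :=
  [[(5, -6), (6, -8), (17, -4), (19, 8), (20, 2), (23, -2), (26, 1), (33, -8), (34, -2), (35, -2)],
   [(9, -6)],
   [(12, -6)],
   [(5, 12), (6, 12), (9, 8), (12, 4), (17, 6), (19, -12), (21, 6), (25, -4), (28, -6), (29, -8), (31, 4), (33, -4), (35, 4), (36, 2), (38, 2), (41, -6), (42, -12)],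
   [(2, 2), (3, 2), (7, -4), (11, 2), (12, 2), (14, -8), (23, 2), (26, -1), (34, 2), (35, 2), (37, -8), (42, -8)],
   [(6, 2), (17, 4), (19, -2), (20, -2), (23, 2), (26, -1), (33, 2), (34, 2), (35, 2)],
   [(6, -16), (17, -8), (18, -6), (19, 4), (20, 4), (23, -4), (25, -4), (26, 2), (29, -2), (30, -2), (33, -8), (34, -8), (35, -8)],
   [(6, 8), (17, 4), (19, -8), (20, -8), (23, 2), (26, -1), (33, 8), (34, 8), (35, 8)],
   [(5, -12), (6, -16), (9, -8), (12, -4), (17, -8), (19, 16), (20, 4), (21, -6), (23, -4), (25, 4), (26, 2), (29, 8), (31, -4), (34, -4), (35, -8), (36, -2), (38, -2)],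
   [(3, 2), (12, 2), (16, -2), (23, 2), (26, -1), (28, 4), (35, 2), (39, -2), (42, 2)],
   [(2, -2), (3, -2), (7, 4), (11, -2), (12, -2), (14, 2), (23, -2), (26, 1), (34, -2), (35, -2), (37, 2), (42, 2)],
   [(19, -6), (33, 6)],
   [(25, 4), (29, 2), (30, 2), (33, 4), (34, 4), (35, 4)],
   [(34, -6), (35, -6)],
   [(36, -6)],
   [(3, -2), (12, -2), (16, 2), (23, -2), (26, 1), (28, -4), (35, -2), (37, -6), (39, 2), (42, -8)],
   [(10, -6), (33, -6)],
   [(6, -8), (17, -4), (19, 8), (20, 2), (23, -2), (26, 1), (33, -8), (34, -2), (35, -2)],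
   [(9, 8), (12, 4), (25, -4), (29, -8), (31, 4), (33, -16), (35, 4), (36, 8), (38, 2)],
   [(3, -6), (16, 6)],
   [(2, 8), (3, 8), (7, -4), (11, 2), (12, 2), (14, -8), (23, 2), (26, -1), (34, 2), (35, 2), (37, -8), (42, -8)],
   [(25, 2), (29, 4), (30, 4), (33, 8), (34, 8), (35, 8)],
   [(9, 4), (12, 8), (25, -2), (29, -4), (31, 2), (33, -8), (35, 8), (36, 4), (38, 4)],
   [(3, -4), (6, 4), (12, -4), (16, 4), (17, 2), (19, -4), (20, -4), (28, -2), (33, 4), (34, 4), (39, 4), (42, -4)],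
   [(2, 4), (3, 4), (6, -4), (7, -2), (11, 4), (12, 4), (14, -4), (17, -2), (19, 4), (20, 4), (33, -4), (37, -4), (42, -4)],
   [(25, 4), (29, 8), (30, 2), (33, 16), (34, 4), (35, 4)],
   [(35, -6)],
   [(3, -2), (12, -2), (16, 2), (23, -2), (26, 1), (28, -4), (35, -2), (39, 2), (42, -8)],
   [(3, -6)],
   [(6, 4), (17, 2), (19, -4), (20, -4), (23, 4), (26, -2), (33, 4), (34, 4), (35, 4)],
   [(33, -6)],
   [(6, -8), (17, -4), (19, 8), (20, 8), (23, -2), (26, 4), (33, -8), (34, -8), (35, -8)]]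

/-- Free columns at `c = 1`. -/
def freeOne : Fin 15 → Fin 42 :=
  ![5, 17, 19, 20, 21, 24, 29, 30, 31, 34, 37, 38, 39, 40, 41]

/-- Kernel basis at `c = 1`. -/
def kerOne : List (List (ℕ × ℤ)) :=
  [[(1, 1), (2, 1), (3, 1), (4, 1), (5, 1), (6, 1)],
   [(1, -2), (2, -2), (3, -2), (4, -1), (5, -1), (7, 1), (8, 1), (9, 1), (17, 1), (18, 1)],
   [(1, 2), (2, 2), (3, 2), (4, 1), (5, 1), (7, -1), (10, 1), (11, 1), (12, 1), (17, -1), (19, 1), (20, 1)],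
   [(1, -2), (2, -1), (4, -1), (7, 1), (10, -1), (13, 1), (15, 1), (17, 1), (19, -1), (21, 1)],
   [(1, 2), (2, 1), (4, 1), (10, 1), (14, 1), (16, 1), (19, 1), (22, 1)],
   [(1, 1), (2, 1), (3, 1), (7, -1), (8, -1), (9, -1), (23, 1), (24, 1), (25, 1)],
   [(1, -2), (2, -2), (3, -2), (7, 2), (8, 1), (9, 1), (10, -1), (11, -1), (12, -1), (23, -2), (24, -1), (26, 1), (29, 1), (30, 1)],
   [(1, 2), (2, 1), (7, -2), (8, -1), (10, 1), (13, -1), (15, -1), (23, 2), (24, 1), (27, 1), (29, -1), (31, 1)],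
   [(1, -2), (2, -1), (7, 1), (8, 1), (10, -1), (14, -1), (16, -1), (28, 1), (29, 1), (32, 1)],
   [(1, 1), (2, 1), (3, 1), (7, -1), (10, 1), (11, 1), (12, 1), (23, 1), (26, -1), (33, 1), (34, 1), (35, 1)],
   [(1, -2), (2, -1), (7, 2), (10, -2), (11, -1), (13, 1), (15, 1), (23, -2), (26, 1), (27, -1), (33, -2), (34, -1), (36, 1), (38, 1)],
   [(1, 2), (2, 1), (7, -1), (10, 2), (11, 1), (14, 1), (16, 1), (28, -1), (33, 2), (34, 1), (37, 1), (39, 1)],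
   [(1, 1), (7, -1), (10, 1), (13, -1), (23, 1), (27, 1), (33, 1), (36, -1), (40, 1)],
   [(1, -2), (7, 1), (10, -2), (13, 1), (14, -1), (28, 1), (33, -2), (36, 1), (37, -1), (41, 1)],
   [(1, 1), (10, 1), (14, 1), (33, 1), (37, 1), (42, 1)]]

/-- Free columns at `c = -1`. -/
def freeNeg : Fin 15 → Fin 42 :=
  ![5, 17, 19, 20, 21, 24, 29, 30, 31, 34, 37, 38, 39, 40, 41]

/-- Kernel basis at `c = -1`. -/
def kerNeg : List (List (ℕ × ℤ)) :=
  [[(1, 1), (2, 1), (3, 1), (4, 1), (5, 1), (6, 1)],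
   [(1, 2), (2, 2), (3, 2), (4, 1), (5, 1), (7, 1), (8, 1), (9, 1), (17, 1), (18, 1)],
   [(1, 2), (2, 2), (3, 2), (4, 1), (5, 1), (7, 1), (10, 1), (11, 1), (12, 1), (17, 1), (19, 1), (20, 1)],
   [(1, 2), (2, 1), (4, 1), (7, 1), (10, 1), (13, 1), (15, 1), (17, 1), (19, 1), (21, 1)],
   [(1, 2), (2, 1), (4, 1), (10, 1), (14, 1), (16, 1), (19, 1), (22, 1)],
   [(1, 1), (2, 1), (3, 1), (7, 1), (8, 1), (9, 1), (23, 1), (24, 1), (25, 1)],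
   [(1, 2), (2, 2), (3, 2), (7, 2), (8, 1), (9, 1), (10, 1), (11, 1), (12, 1), (23, 2), (24, 1), (26, 1), (29, 1), (30, 1)],
   [(1, 2), (2, 1), (7, 2), (8, 1), (10, 1), (13, 1), (15, 1), (23, 2), (24, 1), (27, 1), (29, 1), (31, 1)],
   [(1, 2), (2, 1), (7, 1), (8, 1), (10, 1), (14, 1), (16, 1), (28, 1), (29, 1), (32, 1)],
   [(1, 1), (2, 1), (3, 1), (7, 1), (10, 1), (11, 1), (12, 1), (23, 1), (26, 1), (33, 1), (34, 1), (35, 1)],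
   [(1, 2), (2, 1), (7, 2), (10, 2), (11, 1), (13, 1), (15, 1), (23, 2), (26, 1), (27, 1), (33, 2), (34, 1), (36, 1), (38, 1)],
   [(1, 2), (2, 1), (7, 1), (10, 2), (11, 1), (14, 1), (16, 1), (28, 1), (33, 2), (34, 1), (37, 1), (39, 1)],
   [(1, 1), (7, 1), (10, 1), (13, 1), (23, 1), (27, 1), (33, 1), (36, 1), (40, 1)],
   [(1, 2), (7, 1), (10, 2), (13, 1), (14, 1), (28, 1), (33, 2), (36, 1), (37, 1), (41, 1)],
   [(1, 1), (10, 1), (14, 1), (33, 1), (37, 1), (42, 1)]]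

/-- Free columns for generic `c`. -/
def freeGen : Fin 10 → Fin 42 :=
  ![5, 17, 20, 21, 24, 30, 31, 39, 40, 41]

/-- Coefficient of `t ^ 0` in the kernel basis for generic `c = t`. -/
def kerGen0 : List (List (ℕ × ℤ)) :=
  [[(1, 1), (2, 1), (3, 1), (4, 1), (5, 1), (6, 1)],
   [(7, 1), (8, 1), (9, 1), (17, 1), (18, 1)],
   [(7, 1), (13, 1), (15, 1), (17, 1), (21, 1)],
   [(1, 2), (2, 1), (4, 1), (10, 1), (14, 1), (16, 1), (19, 1), (22, 1)],
   [(23, 1), (24, 1), (25, 1)],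
   [(23, 2), (24, 1), (27, 1), (31, 1)],
   [(7, 1), (8, 1), (28, 1), (29, 1), (32, 1)],
   [(23, 1), (27, 1), (40, 1)],
   [(7, 1), (13, 1), (28, 1), (36, 1), (41, 1)],
   [(1, 1), (10, 1), (14, 1), (33, 1), (37, 1), (42, 1)]]

/-- Coefficient of `t ^ 1` in the kernel basis for generic `c = t`. -/
def kerGen1 : List (List (ℕ × ℤ)) :=
  [[],
   [(1, -2), (2, -2), (3, -2), (4, -1), (5, -1)],
   [(1, -2), (2, -1), (4, -1), (10, -1), (19, -1)],
   [],
   [(7, -1), (8, -1), (9, -1)],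
   [(7, -2), (8, -1), (13, -1), (15, -1), (29, -1)],
   [(1, -2), (2, -1), (10, -1), (14, -1), (16, -1)],
   [(7, -1), (13, -1), (36, -1)],
   [(1, -2), (10, -2), (14, -1), (33, -2), (37, -1)],
   []]

/-- Coefficient of `t ^ 2` in the kernel basis for generic `c = t`. -/
def kerGen2 : List (List (ℕ × ℤ)) :=
  [[],
   [],
   [],
   [],
   [(1, 1), (2, 1), (3, 1)],
   [(1, 2), (2, 1), (10, 1)],
   [],
   [(1, 1), (10, 1), (33, 1)],
   [],
   []]

/-- For the one-parameter family `(1,-1,c,-1)`: over the rational function field `ℚ(t)`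
the matrix of consequences `M(1,-1,t,-1)` has rank exactly 32, and over `ℚ` the matrices
`M(1,-1,1,-1)` and `M(1,-1,-1,-1)` (the latter corresponding to the ternary derivation
identity) each have rank exactly 27. -/
theorem stmt_5 :
    (consMatrix (RatFunc ℚ) 1 (-1) RatFunc.X (-1)).rank = 32 ∧
    (consMatrix ℚ 1 (-1) 1 (-1)).rank = 27 ∧
    (consMatrix ℚ 1 (-1) (-1) (-1)).rank = 27 := by
  refine ⟨?_, ?_, ?_⟩
  · have h1 := rank_lower_gen 2 6 (by decide) invTwo rowsTwo (by decide +kernel)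
    have h2 := rank_upper_gen kerGen0 kerGen1 kerGen2 freeGen (by decide +kernel)
      (by decide +kernel) (RatFunc.X : RatFunc ℚ)
    omega
  · have h1 := rank_lower_int 1 1 (by decide) invOne rowsOne (by decide +kernel)
    have h2 := rank_upper_int 1 kerOne freeOne (by decide +kernel) (by decide +kernel)
    rw [Int.cast_one] at h1 h2
    omega
  · have h1 := rank_lower_int (-1) 1 (by decide) invNeg rowsNeg (by decide +kernel)
    have h2 := rank_upper_int (-1) kerNeg freeNeg (by decide +kernel) (by decide +kernel)
    rw [Int.cast_neg, Int.cast_one] at h1 h2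
    omega
end

section
/- Consider the one-parameter family of coefficient vectors (0,1,0,d). Over the field ℚ(t) of rational functions in one variable t, the matrix of consequences M(0,1,0,t) has rank exactly 34; moreover, over ℚ, the matrix M(0,1,0,0) has rank exactly 26 and the matrix M(0,1,0,−1) has rank exactly 31. -/
/-- Zero-based version of `colQ`. -/
def qIdx : Fin 42 → Fin 42 :=
  ![4, 8, 11, 14, 15, 1, 5, 17, 19, 20, 21, 3, 5, 17, 19, 20, 21, 3, 5, 17, 19, 20, 21, 3, 17, 24, 29, 30, 31, 7, 19, 29, 34, 37, 38, 10, 2, 16, 18, 4, 23, 33]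

/-- Zero-based version of `colS`. -/
def sIdx : Fin 42 → Fin 42 :=
  ![21, 31, 38, 40, 41, 13, 21, 31, 38, 40, 41, 13, 18, 28, 33, 35, 36, 9, 19, 29, 34, 37, 38, 10, 20, 30, 37, 39, 40, 12, 21, 31, 38, 40, 41, 13, 15, 27, 32, 11, 26, 36]

lemma colQ_eq (i : Fin 42) : colQ i = (qIdx i : ℕ) + 1 := by
  revert i; decide

lemma colS_eq (i : Fin 42) : colS i = (sIdx i : ℕ) + 1 := by
  revert i; decide

/-- Each row of `M(0,1,0,d)` acts on a vector through two of its coordinates. -/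
lemma cons_mulVec {K : Type*} [Field K] (d : K) (v : Fin 42 → K) (i : Fin 42) :
    (consMatrix K 0 1 0 d).mulVec v i = v (qIdx i) + d * v (sIdx i) := by
  simp only [Matrix.mulVec, dotProduct, consMatrix, colQ_eq, colS_eq, Nat.add_right_cancel_iff,
    ← Fin.ext_iff, ite_self, zero_add, add_zero, add_mul, ite_mul, one_mul, zero_mul,
    Finset.sum_add_distrib, Finset.sum_ite_eq', Finset.sum_ite_eq, Finset.mem_univ, if_true]

/-- If the kernel is parametrized by the `k` free coordinates `f`, the rank is `42 - k`. -/
lemma rank_of_free {K : Type*} [Field K] (d : K) (k : ℕ) (f : Fin k → Fin 42)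
    (hinj : ∀ v : Fin 42 → K, (∀ i, v (qIdx i) + d * v (sIdx i) = 0) → (∀ j, v (f j) = 0) → v = 0)
    (hsurj : ∀ c : Fin k → K, ∃ v : Fin 42 → K,
      (∀ i, v (qIdx i) + d * v (sIdx i) = 0) ∧ ∀ j, v (f j) = c j) :
    (consMatrix K 0 1 0 d).rank + k = 42 := by
  have hker : ∀ v, v ∈ LinearMap.ker (consMatrix K 0 1 0 d).mulVecLin ↔
      ∀ i, v (qIdx i) + d * v (sIdx i) = 0 := by
    intro v
    rw [LinearMap.mem_ker, Matrix.mulVecLin_apply, funext_iff]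
    simp only [cons_mulVec, Pi.zero_apply]
  let φ : LinearMap.ker (consMatrix K 0 1 0 d).mulVecLin →ₗ[K] (Fin k → K) :=
    (LinearMap.funLeft K K f).comp (Submodule.subtype _)
  have hφ : Function.Bijective φ := by
    constructor
    · rw [← LinearMap.ker_eq_bot, LinearMap.ker_eq_bot']
      rintro ⟨v, hv⟩ h0
      apply Subtype.ext
      exact hinj v ((hker v).1 hv) (fun j => congrFun h0 j)
    · intro c
      obtain ⟨v, hv, hc⟩ := hsurj c
      exact ⟨⟨v, (hker v).2 hv⟩, funext hc⟩
  have h1 := (LinearEquiv.ofBijective φ hφ).finrank_eq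
  have h2 := LinearMap.finrank_range_add_finrank_ker (consMatrix K 0 1 0 d).mulVecLin
  rw [h1] at h2
  simpa [Matrix.rank] using h2

lemma zero_left {K : Type*} [Field K] {d x y : K} (h : x + d * y = 0) (hy : y = 0) : x = 0 := by
  simpa [hy] using h

lemma zero_right {K : Type*} [Field K] {d x y : K} (hd : d ≠ 0) (h : x + d * y = 0)
    (hx : x = 0) : y = 0 := by
  simpa [hx, hd] using h

/-- The 42 kernel equations with all coordinates made explicit. -/
lemma kernel_eqs {K : Type*} [Field K] {d : K} {v : Fin 42 → K}
    (h : ∀ i, v (qIdx i) + d * v (sIdx i) = 0) :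
    v 4 + d * v 21 = 0 ∧ v 8 + d * v 31 = 0 ∧ v 11 + d * v 38 = 0 ∧
    v 14 + d * v 40 = 0 ∧ v 15 + d * v 41 = 0 ∧ v 1 + d * v 13 = 0 ∧
    v 5 + d * v 21 = 0 ∧ v 17 + d * v 31 = 0 ∧ v 19 + d * v 38 = 0 ∧
    v 20 + d * v 40 = 0 ∧ v 21 + d * v 41 = 0 ∧ v 3 + d * v 13 = 0 ∧
    v 5 + d * v 18 = 0 ∧ v 17 + d * v 28 = 0 ∧ v 19 + d * v 33 = 0 ∧
    v 20 + d * v 35 = 0 ∧ v 21 + d * v 36 = 0 ∧ v 3 + d * v 9 = 0 ∧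
    v 5 + d * v 19 = 0 ∧ v 17 + d * v 29 = 0 ∧ v 19 + d * v 34 = 0 ∧
    v 20 + d * v 37 = 0 ∧ v 21 + d * v 38 = 0 ∧ v 3 + d * v 10 = 0 ∧
    v 17 + d * v 20 = 0 ∧ v 24 + d * v 30 = 0 ∧ v 29 + d * v 37 = 0 ∧
    v 30 + d * v 39 = 0 ∧ v 31 + d * v 40 = 0 ∧ v 7 + d * v 12 = 0 ∧
    v 19 + d * v 21 = 0 ∧ v 29 + d * v 31 = 0 ∧ v 34 + d * v 38 = 0 ∧
    v 37 + d * v 40 = 0 ∧ v 38 + d * v 41 = 0 ∧ v 10 + d * v 13 = 0 ∧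
    v 2 + d * v 15 = 0 ∧ v 16 + d * v 27 = 0 ∧ v 18 + d * v 32 = 0 ∧
    v 4 + d * v 11 = 0 ∧ v 23 + d * v 26 = 0 ∧ v 33 + d * v 36 = 0 :=
  ⟨h 0, h 1, h 2, h 3, h 4, h 5, h 6, h 7, h 8, h 9, h 10, h 11, h 12, h 13, h 14, h 15, h 16, h 17, h 18, h 19, h 20, h 21, h 22, h 23, h 24, h 25, h 26, h 27, h 28, h 29, h 30, h 31, h 32, h 33, h 34, h 35, h 36, h 37, h 38, h 39, h 40, h 41⟩

lemma rank_generic {K : Type*} [Field K] (d : K) (hd : d ≠ 0) (hd1 : 1 + d ≠ 0) :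
    (consMatrix K 0 1 0 d).rank + 8 = 42 := by
  apply rank_of_free d 8 ![0, 6, 22, 25, 12, 27, 26, 39]
  · intro v h hf
    obtain ⟨h0, h1, h2, h3, h4, h5, h6, h7, h8, h9, h10, h11, h12, h13, h14, h15, h16, h17, h18, h19, h20, h21, h22, h23, h24, h25, h26, h27, h28, h29, h30, h31, h32, h33, h34, h35, h36, h37, h38, h39, h40, h41⟩ := kernel_eqs h
    have hz : v 0 = 0 ∧ v 6 = 0 ∧ v 22 = 0 ∧ v 25 = 0 ∧ v 12 = 0 ∧ v 27 = 0 ∧ v 26 = 0 ∧ v 39 = 0 :=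
      ⟨hf 0, hf 1, hf 2, hf 3, hf 4, hf 5, hf 6, hf 7⟩
    obtain ⟨z0, z6, z22, z25, z12, z27, z26, z39⟩ := hz
    have cyc : ∀ x y z : K, x + d * z = 0 → x + d * y = 0 → y + d * z = 0 → z = 0 := by
      intro x y z h1 h2 h3
      have h4 : y = z := mul_left_cancel₀ hd (by linear_combination h2 - h1)
      have h5 : (1 + d) * z = 0 := by linear_combination h3 - h4
      exact (mul_eq_zero.1 h5).resolve_left hd1
    have z13 : v 13 = 0 := cyc _ _ _ h11 h23 h35
    have z41 : v 41 = 0 := cyc _ _ _ h10 h22 h34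
    have z40 : v 40 = 0 := cyc _ _ _ h9 h21 h33
    have z14 := zero_left h3 z40
    have z15 := zero_left h4 z41
    have z1 := zero_left h5 z13
    have z20 := zero_left h9 z40
    have z21 := zero_left h10 z41
    have z3 := zero_left h11 z13
    have z35 := zero_right hd h15 z20
    have z36 := zero_right hd h16 z21
    have z9 := zero_right hd h17 z3
    have z37 := zero_right hd h21 z20
    have z38 := zero_right hd h22 z21
    have z10 := zero_right hd h23 z3
    have z17 := zero_left h24 z20
    have z29 := zero_left h26 z37
    have z30 := zero_left h27 z39
    have z31 := zero_left h28 z40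
    have z7 := zero_left h29 z12
    have z19 := zero_left h30 z21
    have z34 := zero_left h32 z38
    have z2 := zero_left h36 z15
    have z16 := zero_left h37 z27
    have z23 := zero_left h40 z26
    have z33 := zero_left h41 z36
    have z4 := zero_left h0 z21
    have z8 := zero_left h1 z31
    have z11 := zero_left h2 z38
    have z5 := zero_left h6 z21
    have z18 := zero_right hd h12 z5
    have z28 := zero_right hd h13 z17
    have z24 := zero_left h25 z30
    have z32 := zero_right hd h38 z18
    ext j
    fin_cases j
    exacts [z0, z1, z2, z3, z4, z5, z6, z7, z8, z9, z10, z11, z12, z13, z14, z15, z16, z17, z18, z19, z20, z21, z22, z23, z24, z25, z26, z27, z28, z29, z30, z31, z32, z33, z34, z35, z36, z37, z38, z39, z40, z41]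
  · intro c
    refine ⟨![c 0, 0, 0, 0, 0, 0, c 1, -d * c 4, 0, 0, 0, 0, c 4, 0, 0, 0, -d * c 5, 0, 0, 0, 0, 0, c 2, -d * c 6, d * d * c 7, c 3, c 6, c 5, 0, 0, -d * c 7, 0, 0, 0, 0, 0, 0, 0, 0, c 7, 0, 0], ?_, ?_⟩
    · intro i
      fin_cases i <;> simp [qIdx, sIdx] <;> ring
    · intro j
      fin_cases j <;> rfl

lemma rank_zero :
    (consMatrix ℚ 0 1 0 (0 : ℚ)).rank + 16 = 42 := by
  apply rank_of_free (0 : ℚ) 16 ![0, 6, 9, 12, 13, 22, 25, 26, 27, 28, 32, 35, 36, 39, 40, 41]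
  · intro v h hf
    obtain ⟨h0, h1, h2, h3, h4, h5, h6, h7, h8, h9, h10, h11, h12, h13, h14, h15, h16, h17, h18, h19, h20, h21, h22, h23, h24, h25, h26, h27, h28, h29, h30, h31, h32, h33, h34, h35, h36, h37, h38, h39, h40, h41⟩ := kernel_eqs h
    have hz : v 0 = 0 ∧ v 6 = 0 ∧ v 9 = 0 ∧ v 12 = 0 ∧ v 13 = 0 ∧ v 22 = 0 ∧ v 25 = 0 ∧ v 26 = 0 ∧ v 27 = 0 ∧ v 28 = 0 ∧ v 32 = 0 ∧ v 35 = 0 ∧ v 36 = 0 ∧ v 39 = 0 ∧ v 40 = 0 ∧ v 41 = 0 :=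
      ⟨hf 0, hf 1, hf 2, hf 3, hf 4, hf 5, hf 6, hf 7, hf 8, hf 9, hf 10, hf 11, hf 12, hf 13, hf 14, hf 15⟩
    obtain ⟨z0, z6, z9, z12, z13, z22, z25, z26, z27, z28, z32, z35, z36, z39, z40, z41⟩ := hz
    have z4 : v 4 = 0 := by simpa using h0
    have z8 : v 8 = 0 := by simpa using h1
    have z11 : v 11 = 0 := by simpa using h2
    have z14 := zero_left h3 z40
    have z15 := zero_left h4 z41
    have z1 := zero_left h5 z13
    have z5 : v 5 = 0 := by simpa using h6
    have z17 : v 17 = 0 := by simpa using h7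
    have z19 : v 19 = 0 := by simpa using h8
    have z20 := zero_left h9 z40
    have z21 := zero_left h10 z41
    have z3 := zero_left h11 z13
    have z24 : v 24 = 0 := by simpa using h25
    have z29 : v 29 = 0 := by simpa using h26
    have z30 := zero_left h27 z39
    have z31 := zero_left h28 z40
    have z7 := zero_left h29 z12
    have z34 : v 34 = 0 := by simpa using h32
    have z37 := zero_left h33 z40
    have z38 := zero_left h34 z41
    have z10 := zero_left h35 z13
    have z2 := zero_left h36 z15
    have z16 := zero_left h37 z27
    have z18 := zero_left h38 z32
    have z23 := zero_left h40 z26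
    have z33 := zero_left h41 z36
    ext j
    fin_cases j
    exacts [z0, z1, z2, z3, z4, z5, z6, z7, z8, z9, z10, z11, z12, z13, z14, z15, z16, z17, z18, z19, z20, z21, z22, z23, z24, z25, z26, z27, z28, z29, z30, z31, z32, z33, z34, z35, z36, z37, z38, z39, z40, z41]
  · intro c
    refine ⟨![c 0, 0, 0, 0, 0, 0, c 1, 0, 0, c 2, 0, 0, c 3, c 4, 0, 0, 0, 0, 0, 0, 0, 0, c 5, 0, 0, c 6, c 7, c 8, c 9, 0, 0, 0, c 10, 0, 0, c 11, c 12, 0, 0, c 13, c 14, c 15], ?_, ?_⟩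
    · intro i
      fin_cases i <;> simp [qIdx, sIdx]
    · intro j
      fin_cases j <;> rfl

lemma rank_neg_one :
    (consMatrix ℚ 0 1 0 (-1 : ℚ)).rank + 11 = 42 := by
  apply rank_of_free (-1 : ℚ) 11 ![0, 13, 41, 6, 12, 40, 27, 22, 26, 39, 25]
  · intro v h hf
    obtain ⟨h0, h1, h2, h3, h4, h5, h6, h7, h8, h9, h10, h11, h12, h13, h14, h15, h16, h17, h18, h19, h20, h21, h22, h23, h24, h25, h26, h27, h28, h29, h30, h31, h32, h33, h34, h35, h36, h37, h38, h39, h40, h41⟩ := kernel_eqs h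
    have hz : v 0 = 0 ∧ v 13 = 0 ∧ v 41 = 0 ∧ v 6 = 0 ∧ v 12 = 0 ∧ v 40 = 0 ∧ v 27 = 0 ∧ v 22 = 0 ∧ v 26 = 0 ∧ v 39 = 0 ∧ v 25 = 0 :=
      ⟨hf 0, hf 1, hf 2, hf 3, hf 4, hf 5, hf 6, hf 7, hf 8, hf 9, hf 10⟩
    obtain ⟨z0, z13, z41, z6, z12, z40, z27, z22, z26, z39, z25⟩ := hz
    have z14 := zero_left h3 z40
    have z15 := zero_left h4 z41
    have z1 := zero_left h5 z13
    have z20 := zero_left h9 z40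
    have z21 := zero_left h10 z41
    have z3 := zero_left h11 z13
    have z35 := zero_right (neg_ne_zero.2 one_ne_zero) h15 z20
    have z36 := zero_right (neg_ne_zero.2 one_ne_zero) h16 z21
    have z9 := zero_right (neg_ne_zero.2 one_ne_zero) h17 z3
    have z37 := zero_right (neg_ne_zero.2 one_ne_zero) h21 z20
    have z38 := zero_right (neg_ne_zero.2 one_ne_zero) h22 z21
    have z10 := zero_right (neg_ne_zero.2 one_ne_zero) h23 z3
    have z17 := zero_left h24 z20
    have z29 := zero_left h26 z37
    have z30 := zero_left h27 z39
    have z31 := zero_left h28 z40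
    have z7 := zero_left h29 z12
    have z19 := zero_left h30 z21
    have z34 := zero_left h32 z38
    have z2 := zero_left h36 z15
    have z16 := zero_left h37 z27
    have z23 := zero_left h40 z26
    have z33 := zero_left h41 z36
    have z4 := zero_left h0 z21
    have z8 := zero_left h1 z31
    have z11 := zero_left h2 z38
    have z5 := zero_left h6 z21
    have z18 := zero_right (neg_ne_zero.2 one_ne_zero) h12 z5
    have z28 := zero_right (neg_ne_zero.2 one_ne_zero) h13 z17
    have z24 := zero_left h25 z30
    have z32 := zero_right (neg_ne_zero.2 one_ne_zero) h38 z18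
    ext j
    fin_cases j
    exacts [z0, z1, z2, z3, z4, z5, z6, z7, z8, z9, z10, z11, z12, z13, z14, z15, z16, z17, z18, z19, z20, z21, z22, z23, z24, z25, z26, z27, z28, z29, z30, z31, z32, z33, z34, z35, z36, z37, z38, z39, z40, z41]
  · intro c
    refine ⟨![c 0, c 1, c 2, c 1, c 2, c 2, c 3, c 4, c 5, c 1, c 1, c 2, c 4, c 1, c 5, c 2, c 6, c 5, c 2, c 2, c 5, c 2, c 7, c 8, c 9, c 10, c 8, c 6, c 5, c 5, c 9, c 5, c 2, c 2, c 2, c 5, c 2, c 5, c 2, c 9, c 5, c 2], ?_, ?_⟩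
    · intro i
      fin_cases i <;> simp [qIdx, sIdx]
    · intro j
      fin_cases j <;> rfl

/-- For the one-parameter family `(0,1,0,d)`: over the rational function field `ℚ(t)`
the matrix of consequences `M(0,1,0,t)` has rank exactly 34, and over `ℚ` the matrix
`M(0,1,0,0)` has rank exactly 26 and `M(0,1,0,-1)` has rank exactly 31. -/
theorem stmt_6 :
    (consMatrix (RatFunc ℚ) 0 1 0 RatFunc.X).rank = 34 ∧
    (consMatrix ℚ 0 1 0 0).rank = 26 ∧
    (consMatrix ℚ 0 1 0 (-1)).rank = 31 := by
  refine ⟨?_, ?_, ?_⟩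
  · have h1 : (1 : RatFunc ℚ) + RatFunc.X ≠ 0 := by
      have h := Polynomial.X_add_C_ne_zero (1 : ℚ)
      rw [← (RatFunc.algebraMap_injective ℚ).ne_iff] at h
      simpa [add_comm] using h
    have h := rank_generic (RatFunc.X : RatFunc ℚ) RatFunc.X_ne_zero h1
    omega
  · have h := rank_zero
    omega
  · have h := rank_neg_one
    omega
end
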